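/- arXiv:2605.15679 — 2 statements merged into one kernel-verified Lean document; each statement's English description precedes it below -/
import Mathlib

section
/- Let n be a natural number, λ : Fin n → ℝ, and let U, Ũ : ℝⁿ → ℝ be twice continuously differentiable functions satisfying ∂ᵢŨ(x) = λᵢ · ∂ᵢU(x) for all x ∈ ℝⁿ and all indices i. Then for any two indices i, j with λᵢ ≠ λⱼ, the mixed second partial derivatives vanish identically: (∂²U/∂xᵢ∂xⱼ)(x) = 0 and (∂²Ũ/∂xᵢ∂xⱼ)(x) = 0 for all x ∈ ℝⁿ. -/
/-- Partial derivative of `f` at `x` in the direction of the `i`-th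
standard basis vector. -/
noncomputable def pd {n : ℕ} (f : EuclideanSpace ℝ (Fin n) → ℝ) (i : Fin n)
    (x : EuclideanSpace ℝ (Fin n)) : ℝ :=
  fderiv ℝ f x (EuclideanSpace.single i 1)

theorem pd_pd_eq {n : ℕ} (f : EuclideanSpace ℝ (Fin n) → ℝ) (hf : ContDiff ℝ 2 f)
    (i j : Fin n) (x : EuclideanSpace ℝ (Fin n)) :
    HasFDerivAt (pd f j) ((fderiv ℝ (fderiv ℝ f) x).flip (EuclideanSpace.single j 1)) x := by
  have h1 : ContDiff ℝ 1 (fderiv ℝ f) := hf.fderiv_right (by norm_num)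
  have h2 := (h1.differentiable (by norm_num) x).hasFDerivAt
  have h3 := h2.clm_apply (hasFDerivAt_const (EuclideanSpace.single j (1:ℝ)) x)
  simp only [ContinuousLinearMap.comp_zero, zero_add] at h3
  exact h3

theorem pd_pd_comm {n : ℕ} (f : EuclideanSpace ℝ (Fin n) → ℝ) (hf : ContDiff ℝ 2 f)
    (i j : Fin n) (x : EuclideanSpace ℝ (Fin n)) :
    pd (pd f j) i x = pd (pd f i) j x := by
  have h1 : ContDiff ℝ 1 (fderiv ℝ f) := hf.fderiv_right (by norm_num)
  have h2 := (h1.differentiable (by norm_num) x).hasFDerivAt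
  have h0 : ∀ y, HasFDerivAt f (fderiv ℝ f y) y :=
    fun y => (hf.differentiable (by norm_num) y).hasFDerivAt
  have e1 := (pd_pd_eq f hf i j x).fderiv
  have e2 := (pd_pd_eq f hf j i x).fderiv
  rw [pd, e1, pd, e2]
  exact second_derivative_symmetric h0 h2 _ _

theorem stmt_8 (n : ℕ) (lam : Fin n → ℝ)
    (U Ut : EuclideanSpace ℝ (Fin n) → ℝ)
    (hU : ContDiff ℝ 2 U) (hUt : ContDiff ℝ 2 Ut)
    (hpd : ∀ (x : EuclideanSpace ℝ (Fin n)) (i : Fin n),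
      pd Ut i x = lam i * pd U i x) :
    ∀ i j : Fin n, lam i ≠ lam j →
      ∀ x : EuclideanSpace ℝ (Fin n),
        pd (pd U j) i x = 0 ∧ pd (pd Ut j) i x = 0 := by
  intro i j hij x
  have key : ∀ i j : Fin n, pd (pd Ut j) i x = lam j * pd (pd U j) i x := by
    intro i j
    have e : pd Ut j = fun y => lam j * pd U j y := funext fun y => hpd y j
    have h := ((pd_pd_eq U hU i j x).const_mul (lam j)).fderiv
    rw [e, pd, h, pd, (pd_pd_eq U hU i j x).fderiv]
    simp
  have a := key i j
  have b := key j i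
  rw [pd_pd_comm Ut hUt j i, pd_pd_comm U hU j i] at b
  have c : (lam i - lam j) * pd (pd U j) i x = 0 := by linarith
  have d := (mul_eq_zero.mp c).resolve_left (sub_ne_zero.mpr hij)
  exact ⟨d, by rw [a, d, mul_zero]⟩
end

section
/- Let n be a natural number, S a subset of Fin n, μ₁ ≠ μ₂ real numbers, and define λ : Fin n → ℝ by λᵢ = μ₁ if i ∈ S and λᵢ = μ₂ otherwise. Let U, Ũ : ℝⁿ → ℝ be twice continuously differentiable with ∂ᵢŨ(x) = λᵢ · ∂ᵢU(x) for all x ∈ ℝⁿ and all i. Then there exist functions H₁, H₂ : ℝⁿ → ℝ and a constant C ∈ ℝ such that: H₁(x) depends only on the coordinates xᵢ with i ∈ S (i.e. H₁(x) = H₁(y) whenever xᵢ = yᵢ for all i ∈ S), H₂(x) depends only on the coordinates xᵢ with i ∉ S, and for all x ∈ ℝⁿ, U(x) = H₁(x) + H₂(x) and Ũ(x) = μ₁·H₁(x) + μ₂·H₂(x) + C. -/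
theorem pd_const {n : ℕ} (G : EuclideanSpace ℝ (Fin n) → ℝ) (hG : Differentiable ℝ G)
    (x y : EuclideanSpace ℝ (Fin n))
    (h : ∀ i, x i = y i ∨ ∀ z, pd G i z = 0) : G x = G y := by
  have hv : ∀ z, fderiv ℝ G z (y - x) = 0 := by
    intro z
    have e : y - x = ∑ i, (y i - x i) • EuclideanSpace.single i (1 : ℝ) := by
      ext j
      simp [Finset.sum_apply, Pi.single_apply]
    rw [e, map_sum]
    apply Finset.sum_eq_zero
    intro i _
    rw [map_smul]
    rcases h i with h | h
    · simp [h]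
    · have := h z
      unfold pd at this
      simp [this]
  have hd : ∀ t : ℝ, HasDerivAt (fun t : ℝ => G (x + t • (y - x))) 0 t := by
    intro t
    have h1 : HasDerivAt (fun t : ℝ => x + t • (y - x)) (y - x) t := by
      simpa using ((hasDerivAt_id t).smul_const (y - x)).const_add x
    have h2 := (hG (x + t • (y - x))).hasFDerivAt.comp_hasDerivAt t h1
    rw [hv] at h2
    exact h2
  have := is_const_of_deriv_eq_zero (fun t => (hd t).differentiableAt) (fun t => (hd t).deriv) 0 1
  simpa using this

theorem pd_comb {n : ℕ} (U V : EuclideanSpace ℝ (Fin n) → ℝ) (hU : Differentiable ℝ U)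
    (hV : Differentiable ℝ V) (a b : ℝ) (i : Fin n) (z : EuclideanSpace ℝ (Fin n)) :
    pd (fun x => a * U x + b * V x) i z = a * pd U i z + b * pd V i z := by
  unfold pd
  have h := (((hU z).hasFDerivAt.const_mul a).add ((hV z).hasFDerivAt.const_mul b)).fderiv
  refine (congrArg (fun L => L (EuclideanSpace.single i 1)) h).trans ?_
  simp

open Classical in
theorem stmt_10 (n : ℕ) (S : Set (Fin n)) (μ₁ μ₂ : ℝ) (hμ : μ₁ ≠ μ₂)
    (lam : Fin n → ℝ) (hlam : ∀ i, lam i = if i ∈ S then μ₁ else μ₂)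
    (U Ut : EuclideanSpace ℝ (Fin n) → ℝ)
    (hU : ContDiff ℝ 2 U) (hUt : ContDiff ℝ 2 Ut)
    (hpd : ∀ (x : EuclideanSpace ℝ (Fin n)) (i : Fin n),
      pd Ut i x = lam i * pd U i x) :
    ∃ (H₁ H₂ : EuclideanSpace ℝ (Fin n) → ℝ) (C : ℝ),
      (∀ x y : EuclideanSpace ℝ (Fin n), (∀ i ∈ S, x i = y i) → H₁ x = H₁ y) ∧
      (∀ x y : EuclideanSpace ℝ (Fin n), (∀ i ∉ S, x i = y i) → H₂ x = H₂ y) ∧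
      (∀ x : EuclideanSpace ℝ (Fin n),
        U x = H₁ x + H₂ x ∧ Ut x = μ₁ * H₁ x + μ₂ * H₂ x + C) := by
  have dU : Differentiable ℝ U := hU.differentiable (by norm_num)
  have dV : Differentiable ℝ Ut := hUt.differentiable (by norm_num)
  have hs : μ₁ - μ₂ ≠ 0 := sub_ne_zero.mpr hμ
  refine ⟨fun x => (-μ₂ / (μ₁ - μ₂)) * U x + (1 / (μ₁ - μ₂)) * Ut x,
    fun x => (μ₁ / (μ₁ - μ₂)) * U x + (-1 / (μ₁ - μ₂)) * Ut x, 0, ?_, ?_, ?_⟩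
  · intro x y h
    refine pd_const _ ((dU.const_mul _).add (dV.const_mul _)) x y fun i => ?_
    by_cases hi : i ∈ S
    · exact Or.inl (h i hi)
    · right
      intro z
      refine (pd_comb U Ut dU dV _ _ i z).trans ?_
      rw [hpd, hlam, if_neg hi]
      ring
  · intro x y h
    refine pd_const _ ((dU.const_mul _).add (dV.const_mul _)) x y fun i => ?_
    by_cases hi : i ∈ S
    · right
      intro z
      refine (pd_comb U Ut dU dV _ _ i z).trans ?_
      rw [hpd, hlam, if_pos hi]
      ring
    · exact Or.inl (h i hi)
  · intro x
    constructor
    · field_simp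
      ring
    · field_simp
      ring
end
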